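/- For all n ≥ 10, the number of minimal forts of the cycle graph C_n equals the nearest integer to ψ^n, where ψ is the plastic ratio. Moreover, the limit as n → ∞ of the ratio |𝓕_{C_{n+1}}| / |𝓕_{C_n}| equals ψ. -/

import Mathlib

/-!
In the cycle `C_n` with `n ≥ 3`, a set `F` is a fort exactly when no two consecutive vertices lie
outside it: two consecutive missing vertices would force all vertices to be missing. Hence `F` is a
minimal fort exactly when, read as a cyclic binary word, it avoids the patterns `00` and `111`
(`isMinimalFort_cycle_iff`).

Such words are counted with a transfer matrix on pairs of consecutive letters (`wordCount`), whose
characteristic polynomial is `λ³ - λ - 1`; the number of closed walks is the Perrin number `P n`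
(`numMinimalForts_cycle`).

Finally `P n = ψ ^ n + s n`, where `s n = σ ^ n + σ̄ ^ n` comes from the two non-real roots of
`λ³ - λ - 1` and `|σ|² = 1 / ψ`. A quadratic form in consecutive terms of `s` is geometric with
ratio `1 / ψ`, which gives `s n ^ 2 ≤ 4 / ψ ^ n` (`tailSeq_sq_le`). Since `ψ ^ 5 = ψ² + ψ + 1 > 4`,
this is below `1 / 4` for `n ≥ 10`, so `P n` is the nearest integer to `ψ ^ n`; moreover
`P n / ψ ^ n → 1`, and the limit of the ratios follows.
-/

open SimpleGraph

/-- A nonempty set `F` of vertices is a *fort* of `G` if no vertex outside `F`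
has exactly one neighbor in `F`. -/
def IsFort {V : Type*} (G : SimpleGraph V) (F : Set V) : Prop :=
  F.Nonempty ∧ ∀ u ∉ F, ¬ (∃! w, w ∈ F ∧ G.Adj u w)

/-- A fort is *minimal* if no proper subset is a fort. -/
def IsMinimalFort {V : Type*} (G : SimpleGraph V) (F : Set V) : Prop :=
  IsFort G F ∧ ∀ F' ⊂ F, ¬ IsFort G F'

/-- The number of minimal forts of a graph. -/
noncomputable def numMinimalForts {V : Type*} (G : SimpleGraph V) : ℕ :=
  {F : Set V | IsMinimalFort G F}.ncard

/-! ### Minimal forts of a cycle -/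

section

open scoped Fin.NatCast Fin.CommRing

lemma cycleGraph_adj_iff {m : ℕ} (u v : Fin (m + 3)) :
    (cycleGraph (m + 3)).Adj u v ↔ v = u + 1 ∨ v = u - 1 := by
  rw [cycleGraph_adj, sub_eq_iff_eq_add, sub_eq_iff_eq_add, eq_sub_iff_add_eq]
  constructor <;> rintro (h | h) <;> simp [h, add_comm]

/-- Forts of a cycle are its vertex covers: an edge missed by `F` spreads around the cycle, since
its endpoint may not have exactly one neighbour in `F`. -/
lemma isFort_cycle_iff {m : ℕ} (F : Set (Fin (m + 3))) :
    IsFort (cycleGraph (m + 3)) F ↔ ∀ i, i ∈ F ∨ i + 1 ∈ F := by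
  constructor
  · rintro ⟨⟨w, hw⟩, h⟩ i
    by_contra! hi
    have key : ∀ k : ℕ, i + (k : Fin (m + 3)) ∉ F ∧ i + (k : Fin (m + 3)) + 1 ∉ F := by
      intro k
      induction k with
      | zero => simpa using hi
      | succ k ih =>
        have e : i + ((k + 1 : ℕ) : Fin (m + 3)) = i + (k : Fin (m + 3)) + 1 := by
          push_cast; ring
        rw [e]
        refine ⟨ih.2, fun hF => h _ ih.2 ⟨_, ⟨hF, ?_⟩, ?_⟩⟩
        · exact (cycleGraph_adj_iff _ _).2 (Or.inl rfl)
        · rintro y ⟨hy, hadj⟩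
          rcases (cycleGraph_adj_iff _ _).1 hadj with rfl | rfl
          · rfl
          · rw [add_sub_cancel_right] at hy
            exact absurd hy ih.1
    have := (key ((w - i : Fin (m + 3)) : ℕ)).1
    rw [Fin.cast_val_eq_self, add_sub_cancel] at this
    exact this hw
  · intro h
    refine ⟨(h 0).elim (fun h => ⟨_, h⟩) (fun h => ⟨_, h⟩), ?_⟩
    rintro u hu ⟨w, -, hw⟩
    have h1 : u + 1 ∈ F := (h u).resolve_left hu
    have h2 : u - 1 ∈ F := (h (u - 1)).resolve_right (by simpa using hu)
    have e : u + 1 = u - 1 :=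
      (hw _ ⟨h1, (cycleGraph_adj_iff _ _).2 (Or.inl rfl)⟩).trans
        (hw _ ⟨h2, (cycleGraph_adj_iff _ _).2 (Or.inr rfl)⟩).symm
    -- The two neighbours of `u` differ because `2 ≠ 0` modulo `m + 3`.
    have e2 : (1 + 1 : Fin (m + 3)) = 0 := by
      rw [eq_sub_iff_add_eq, add_assoc] at e
      simpa using e
    have := congrArg Fin.val e2
    simp [Fin.val_add] at this
    rw [Nat.mod_eq_of_lt (by omega)] at this
    omega

/-- Minimal vertex covers of a cycle: the middle vertex of three consecutive members of `F` could
be removed, while any other member has a neighbour outside `F`. -/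
lemma isMinimalFort_cycle_iff {m : ℕ} (F : Set (Fin (m + 3))) :
    IsMinimalFort (cycleGraph (m + 3)) F ↔
      ∀ i, (i ∈ F ∨ i + 1 ∈ F) ∧ (i + 1 ∈ F ∨ i + 1 + 1 ∈ F) ∧
        ¬ (i ∈ F ∧ i + 1 ∈ F ∧ i + 1 + 1 ∈ F) := by
  unfold IsMinimalFort
  simp only [isFort_cycle_iff]
  constructor
  · rintro ⟨h, hmin⟩ i
    refine ⟨h i, h (i + 1), ?_⟩
    rintro ⟨h0, h1, h2⟩
    refine hmin (F \ {i + 1}) ⟨Set.sdiff_subset, fun hs => (hs h1).2 rfl⟩ fun j => ?_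
    have n1 : ∀ x : Fin (m + 3), x ≠ x + 1 := by
      intro x hx
      simp at hx
    by_cases hj : j = i + 1
    · subst hj
      exact Or.inr ⟨h2, fun e => n1 (i + 1) (Set.mem_singleton_iff.1 e).symm⟩
    · by_cases hj' : j + 1 = i + 1
      · have : j = i := by simpa using hj'
        subst this
        exact Or.inl ⟨h0, hj⟩
      · exact (h j).imp (fun a => ⟨a, hj⟩) (fun a => ⟨a, hj'⟩)
  · intro h
    refine ⟨fun i => (h i).1, fun F' hF hc => ?_⟩
    obtain ⟨v, hv, hv'⟩ := Set.exists_of_ssubset hF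
    have h1 : v + 1 ∈ F' := (hc v).resolve_left hv'
    have h2 : v - 1 ∈ F' := (hc (v - 1)).resolve_right (by simpa using hv')
    refine (h (v - 1)).2.2 ⟨hF.1 h2, ?_, ?_⟩ <;> simp only [sub_add_cancel]
    exacts [hv, hF.1 h1]

/-! ### Counting cyclic words -/

/-- Whether three consecutive letters avoid the patterns `00` and `111`. -/
def goodTriple (a b c : Bool) : Bool := (a || b) && (b || c) && !(a && b && c)

/-- Binary words `y` of length `n + 2` all of whose `n` windows of length three are good. -/
def GoodWord (n : ℕ) (y : Fin (n + 2) → Bool) : Prop :=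
  ∀ i : Fin n, goodTriple (y i.castSucc.castSucc) (y i.succ.castSucc) (y i.succ.succ) = true

instance (n : ℕ) : DecidablePred (GoodWord n) := fun y => by
  unfold GoodWord; infer_instance

/-- The good words of length `n + 2` that begin with `a b` and end with `c d`. -/
def wordSet (n : ℕ) (a b c d : Bool) : Finset (Fin (n + 2) → Bool) :=
  {y | y 0 = a ∧ y 1 = b ∧ y (Fin.last n).castSucc = c ∧ y (Fin.last (n + 1)) = d ∧ GoodWord n y}

/-- The cardinality of `wordSet`, computed by deleting the first letter. -/
def wordCount : ℕ → Bool → Bool → Bool → Bool → ℕ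
  | 0, a, b, c, d => if a = c ∧ b = d then 1 else 0
  | n + 1, a, b, c, d => ∑ e : Bool, if goodTriple a b e then wordCount n b e c d else 0

lemma card_wordSet (n : ℕ) (a b c d : Bool) : (wordSet n a b c d).card = wordCount n a b c d := by
  induction n generalizing a b with
  | zero => revert a b c d; decide
  | succ n ih =>
    rw [wordCount, Finset.card_eq_sum_card_fiberwise (f := fun y => y 2) (t := Finset.univ)
      (fun _ _ => Finset.mem_coe.2 (Finset.mem_univ _))]
    refine Finset.sum_congr rfl fun e _ => ?_
    have hg : ∀ y : Fin (n + 1 + 2) → Bool, GoodWord (n + 1) y ↔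
        goodTriple (y 0) (y 1) (y 2) = true ∧ GoodWord n (Fin.tail y) := by
      intro y
      unfold GoodWord
      rw [Fin.forall_fin_succ]
      rfl
    split_ifs with he
    · rw [← ih]
      refine Finset.card_nbij' Fin.tail (fun z => Fin.cons a z) ?_ ?_ ?_ ?_
      · intro y hy
        simp only [wordSet, Finset.coe_filter, Finset.mem_filter, Finset.mem_univ, true_and,
          Set.mem_ofPred_eq, hg] at hy ⊢
        obtain ⟨⟨h0, h1, h2, h3, h4, h5⟩, h6⟩ := hy
        exact ⟨h1, h6, h2, h3, h5⟩
      · intro z hz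
        simp only [wordSet, Finset.coe_filter, Finset.mem_filter, Finset.mem_univ, true_and,
          Set.mem_ofPred_eq, hg, Fin.tail_cons] at hz ⊢
        obtain ⟨h1, h2, h3, h4, h5⟩ := hz
        refine ⟨⟨rfl, h1, h3, h4, ?_, h5⟩, h2⟩
        have : goodTriple a (z 0) (z 1) = true := by rw [h1, h2]; exact he
        exact this
      · intro y hy
        simp only [wordSet, Finset.coe_filter, Finset.mem_filter, Finset.mem_univ, true_and,
          Set.mem_ofPred_eq] at hy
        dsimp only
        rw [← hy.1.1, Fin.cons_self_tail]
      · intro z _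
        simp
    · rw [Finset.card_eq_zero, Finset.filter_eq_empty_iff]
      intro y hy h2
      simp only [wordSet, Finset.mem_filter, Finset.mem_univ, true_and, hg] at hy
      obtain ⟨h0, h1, -, -, h4, -⟩ := hy
      rw [h0, h1, h2] at h4
      exact he h4

/-- The Perrin numbers `3, 0, 2, 3, 2, 5, 5, 7, …`. -/
def perrin : ℕ → ℕ
  | 0 => 3
  | 1 => 0
  | 2 => 2
  | n + 3 => perrin (n + 1) + perrin n

/-- The Perrin recurrence: the transfer matrix on the pairs `01`, `10`, `11` is annihilated by its
characteristic polynomial `λ³ - λ - 1`. -/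
lemma wordCount_rec (n : ℕ) (a b c d : Bool) (h : (a || b) = true) :
    wordCount (n + 3) a b c d = wordCount (n + 1) a b c d + wordCount n a b c d := by
  cases a <;> cases b <;> simp_all [wordCount, goodTriple] <;> omega

/-- The trace of the `n`-th power of the transfer matrix. -/
lemma sum_wordCount_eq_perrin (n : ℕ) :
    wordCount n false true false true + wordCount n true false true false
      + wordCount n true true true true = perrin n := by
  induction n using perrin.induct with
  | case1 => decide
  | case2 => decide
  | case3 => decide
  | case4 n ih1 ih0 =>
    rw [perrin, ← ih1, ← ih0]
    simp only [wordCount_rec, Bool.or_true, Bool.true_or, Bool.or_self]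
    omega

lemma numMinimalForts_cycle (m : ℕ) : numMinimalForts (cycleGraph (m + 3)) = perrin (m + 3) := by
  classical
  -- Minimal forts correspond to good words of length `m + 5` that repeat their first two letters.
  have key : numMinimalForts (cycleGraph (m + 3)) =
      (Finset.univ.filter fun y : Fin (m + 3 + 2) → Bool =>
        (y (Fin.last (m + 3)).castSucc = y 0 ∧ y (Fin.last (m + 3 + 1)) = y 1) ∧
          GoodWord (m + 3) y).card := by
    rw [← Set.ncard_coe_finset]
    unfold numMinimalForts
    have hcast : ∀ i : Fin (m + 3),
        ((i.castSucc.castSucc : ℕ) : Fin (m + 3)) = i ∧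
        ((i.succ.castSucc : ℕ) : Fin (m + 3)) = i + 1 ∧
        ((i.succ.succ : ℕ) : Fin (m + 3)) = i + 1 + 1 := by
      intro i
      simp
    refine Set.ncard_congr (fun F _ j => decide (((j : ℕ) : Fin (m + 3)) ∈ F)) ?_ ?_ ?_
    · intro F hF
      have hF := (isMinimalFort_cycle_iff F).1 hF
      simp only [Finset.coe_filter, Finset.mem_univ, true_and, Set.mem_ofPred_eq]
      refine ⟨⟨?_, ?_⟩, fun i => ?_⟩
      · simp
      · simp
      · dsimp only
        rw [(hcast i).1, (hcast i).2.1, (hcast i).2.2]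
        have := hF i
        simp only [goodTriple, Bool.and_eq_true, Bool.or_eq_true, decide_eq_true_eq,
          Bool.not_eq_true', Bool.and_eq_false_iff, decide_eq_false_iff_not]
        tauto
    · intro F F' _ _ h
      ext i
      have := congrFun h i.castSucc.castSucc
      simpa using this
    · intro y hy
      simp only [Finset.coe_filter, Finset.mem_univ, true_and, Set.mem_ofPred_eq] at hy
      obtain ⟨⟨h0, h1⟩, hg⟩ := hy
      have hy' : ∀ j : Fin (m + 3 + 2),
          y ((j : ℕ) : Fin (m + 3)).castSucc.castSucc = y j := by
        intro j
        induction j using Fin.lastCases with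
        | last =>
          rw [h1]
          congr 1
          ext
          simp only [Fin.val_castSucc, Fin.val_natCast, Fin.val_last, Fin.val_one]
          rw [show m + 3 + 1 = 1 + (m + 3) by ring, Nat.add_mod_right,
            Nat.mod_eq_of_lt (by omega)]
        | cast j =>
          induction j using Fin.lastCases with
          | last =>
            rw [h0]
            congr 1
            ext
            simp
          | cast j => simp
      refine ⟨{i | y i.castSucc.castSucc = true}, ?_, ?_⟩
      · refine (isMinimalFort_cycle_iff _).2 fun i => ?_
        have := hg i
        rw [← hy' i.castSucc.castSucc, ← hy' i.succ.castSucc, ← hy' i.succ.succ,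
          (hcast i).1, (hcast i).2.1, (hcast i).2.2] at this
        simp only [goodTriple, Bool.and_eq_true, Bool.or_eq_true, Bool.not_eq_true',
          ← Bool.not_eq_true] at this
        simp only [Set.mem_ofPred_eq]
        tauto
      · funext j
        simp [hy']
  rw [key, Finset.card_eq_sum_card_fiberwise (f := fun y => (y 0, y 1)) (t := Finset.univ)
      (fun _ _ => Finset.mem_coe.2 (Finset.mem_univ _))]
  have hfib : ∀ p : Bool × Bool, ((Finset.univ.filter fun y : Fin (m + 3 + 2) → Bool =>
        (y (Fin.last (m + 3)).castSucc = y 0 ∧ y (Fin.last (m + 3 + 1)) = y 1) ∧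
          GoodWord (m + 3) y).filter fun y => (y 0, y 1) = p).card
        = wordCount (m + 3) p.1 p.2 p.1 p.2 := by
    rintro ⟨a, b⟩
    rw [← card_wordSet]
    congr 1
    ext y
    simp only [wordSet, Finset.mem_filter, Finset.mem_univ, true_and, Prod.mk.injEq]
    constructor
    · rintro ⟨⟨⟨h1, h2⟩, h3⟩, rfl, rfl⟩
      exact ⟨rfl, rfl, h1, h2, h3⟩
    · rintro ⟨rfl, rfl, h1, h2, h3⟩
      exact ⟨⟨⟨h1, h2⟩, h3⟩, rfl, rfl⟩
  simp only [hfib]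
  have h00 : wordCount (m + 3) false false false false = 0 := by
    simp [wordCount, goodTriple]
  rw [← sum_wordCount_eq_perrin, Fintype.sum_prod_type]
  simp [h00]
  omega

end

/-! ### Perrin numbers and the plastic ratio -/

/-- The contribution `σⁿ + σ̄ⁿ` of the two non-real roots of `λ³ - λ - 1`, given by its real
recurrence: `σ + σ̄ = -ψ` and `σ σ̄ = 1 / ψ = ψ² - 1`. -/
noncomputable def tailSeq (ψ : ℝ) : ℕ → ℝ
  | 0 => 2
  | 1 => -ψ
  | n + 2 => -ψ * tailSeq ψ (n + 1) - (ψ ^ 2 - 1) * tailSeq ψ n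

lemma plastic_bounds {ψ : ℝ} (hψ : ψ ^ 3 = ψ + 1) : 1.32 < ψ ∧ ψ < 1.33 := by
  constructor
  · by_contra! h
    nlinarith [sq_nonneg (ψ + 1.32 / 2), sq_nonneg (ψ + 1), sq_nonneg ψ]
  · by_contra! h
    nlinarith [sq_nonneg (ψ + 1.33 / 2), sq_nonneg (ψ - 1)]

lemma perrin_eq {ψ : ℝ} (hψ : ψ ^ 3 = ψ + 1) (n : ℕ) :
    (perrin n : ℝ) = ψ ^ n + tailSeq ψ n := by
  induction n using perrin.induct with
  | case1 => norm_num [perrin, tailSeq]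
  | case2 => norm_num [perrin, tailSeq]
  | case3 => norm_num [perrin, tailSeq]; ring
  | case4 n ih1 ih0 =>
    rw [perrin]
    push_cast
    rw [ih1, ih0]
    simp only [tailSeq]
    rw [Nat.succ_eq_add_one]
    linear_combination (-ψ ^ n - tailSeq ψ n) * hψ

/-- The quadratic form `x² + ψ x y + (ψ² - 1) y²` in consecutive terms of `tailSeq` is multiplied
by `ψ² - 1` (which is `1 / ψ` for the plastic ratio) at each step. -/
lemma tailSeq_form (ψ : ℝ) (n : ℕ) :
    tailSeq ψ (n + 1) ^ 2 + ψ * tailSeq ψ n * tailSeq ψ (n + 1)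
      + (ψ ^ 2 - 1) * tailSeq ψ n ^ 2 = (ψ ^ 2 - 1) ^ n * (3 * ψ ^ 2 - 4) := by
  induction n with
  | zero => simp only [tailSeq]; ring
  | succ n ih =>
    rw [pow_succ (ψ ^ 2 - 1), mul_right_comm ((ψ ^ 2 - 1) ^ n), ← ih]
    simp only [tailSeq]
    ring

lemma tailSeq_sq_le {ψ : ℝ} (hψ : ψ ^ 3 = ψ + 1) (n : ℕ) :
    tailSeq ψ n ^ 2 ≤ 4 * (ψ ^ 2 - 1) ^ n := by
  obtain ⟨h1, h2⟩ := plastic_bounds hψ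
  have hf := tailSeq_form ψ n
  have hpos : 0 < 3 * ψ ^ 2 - 4 := by nlinarith
  -- Complete the square; the form has discriminant `ψ² - 4 (ψ² - 1) = -(3 ψ² - 4)`.
  have hsq := sq_nonneg (tailSeq ψ (n + 1) + ψ / 2 * tailSeq ψ n)
  have : (3 * ψ ^ 2 - 4) * tailSeq ψ n ^ 2 ≤ (3 * ψ ^ 2 - 4) * (4 * (ψ ^ 2 - 1) ^ n) := by
    nlinarith
  exact le_of_mul_le_mul_left this hpos

lemma abs_tailSeq_lt {ψ : ℝ} (hψ : ψ ^ 3 = ψ + 1) (n : ℕ) (hn : 10 ≤ n) :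
    |tailSeq ψ n| < 1 / 2 := by
  obtain ⟨h1, h2⟩ := plastic_bounds hψ
  have h := tailSeq_sq_le hψ n
  have hinv : ψ * (ψ ^ 2 - 1) = 1 := by linear_combination hψ
  have hq0 : 0 ≤ ψ ^ 2 - 1 := by nlinarith
  have hq1 : ψ ^ 2 - 1 ≤ 1 := by nlinarith
  have hle : (ψ ^ 2 - 1) ^ n ≤ (ψ ^ 2 - 1) ^ 10 := pow_le_pow_of_le_one hq0 hq1 hn
  -- `ψ⁵ = ψ² + ψ + 1 > 4`
  have h5 : 4 < ψ ^ 5 := by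
    have : ψ ^ 5 = ψ ^ 2 + ψ + 1 := by linear_combination (ψ ^ 2 + 1) * hψ
    nlinarith
  have hq5 : (ψ ^ 2 - 1) ^ 5 < 1 / 4 := by
    have e : ψ ^ 5 * (ψ ^ 2 - 1) ^ 5 = 1 := by rw [← mul_pow, hinv, one_pow]
    have := pow_nonneg hq0 5
    by_contra! hc
    nlinarith
  have hq10 : (ψ ^ 2 - 1) ^ 10 < 1 / 16 := by
    have := pow_nonneg hq0 5
    calc (ψ ^ 2 - 1) ^ 10 = (ψ ^ 2 - 1) ^ 5 * (ψ ^ 2 - 1) ^ 5 := by ring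
      _ < 1 / 16 := by nlinarith
  refine abs_lt_of_sq_lt_sq ?_ (by norm_num)
  linarith

lemma tendsto_perrin_div_pow {ψ : ℝ} (hψ : ψ ^ 3 = ψ + 1) :
    Filter.Tendsto (fun n => (perrin n : ℝ) / ψ ^ n) Filter.atTop (nhds 1) := by
  obtain ⟨h1, h2⟩ := plastic_bounds hψ
  have hz : Filter.Tendsto (fun n => tailSeq ψ n / ψ ^ n) Filter.atTop (nhds 0) := by
    have hg : Filter.Tendsto (fun n => (1 / 2 : ℝ) * (ψ⁻¹) ^ n) Filter.atTop (nhds 0) := by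
      have := (tendsto_pow_atTop_nhds_zero_of_lt_one (r := ψ⁻¹) (by positivity)
        (inv_lt_one_of_one_lt₀ (by linarith))).const_mul (1 / 2 : ℝ)
      simpa using this
    refine squeeze_zero_norm' ?_ hg
    filter_upwards [Filter.eventually_ge_atTop 10] with n hn
    have hp : 0 < ψ ^ n := by positivity
    rw [Real.norm_eq_abs, abs_div, abs_of_pos hp, inv_pow, ← div_eq_mul_inv]
    gcongr
    exact (abs_tailSeq_lt hψ n hn).le
  have := hz.const_add 1
  rw [add_zero] at this
  refine this.congr fun n => ?_
  have hp : ψ ^ n ≠ 0 := by positivity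
  rw [perrin_eq hψ]
  field_simp

/-- **Corollary.** For `n ≥ 10`, the number of minimal forts of the cycle
graph `C_n` is the nearest integer to `ψ ^ n`, where `ψ` is the plastic ratio
(the unique real root of `λ³ - λ - 1`); moreover the successive ratios
`|𝓕_{C_{n+1}}| / |𝓕_{C_n}|` converge to `ψ`. -/
theorem numMinimalForts_cycle_round (ψ : ℝ) (hψ : ψ ^ 3 = ψ + 1) :
    (∀ n : ℕ, 10 ≤ n →
      (numMinimalForts (SimpleGraph.cycleGraph n) : ℤ) = round (ψ ^ n)) ∧
    Filter.Tendsto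
      (fun n : ℕ => (numMinimalForts (SimpleGraph.cycleGraph (n + 1)) : ℝ) /
        (numMinimalForts (SimpleGraph.cycleGraph n) : ℝ))
      Filter.atTop (nhds ψ) := by
  obtain ⟨h1, h2⟩ := plastic_bounds hψ
  have hnum : ∀ n, 3 ≤ n → numMinimalForts (cycleGraph n) = perrin n := by
    intro n hn
    obtain ⟨m, rfl⟩ := Nat.exists_eq_add_of_le' hn
    exact numMinimalForts_cycle m
  constructor
  · intro n hn
    rw [hnum n (by omega), round_eq, eq_comm, Int.floor_eq_iff]
    have h := abs_lt.1 (abs_tailSeq_lt hψ n hn)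
    have hp := perrin_eq hψ n
    push_cast
    constructor <;> linarith
  · have hlim := tendsto_perrin_div_pow hψ
    have hq := (((Filter.tendsto_add_atTop_iff_nat 1).2 hlim).div hlim one_ne_zero).const_mul ψ
    rw [div_one, mul_one] at hq
    refine hq.congr' ?_
    filter_upwards [Filter.eventually_ge_atTop 3] with n hn
    rw [hnum n hn, hnum (n + 1) (by omega)]
    have hp : ψ ≠ 0 := by linarith
    simp only [Pi.div_apply]
    by_cases h0 : (perrin n : ℝ) = 0
    · simp [h0]
    · field_simp
      ring
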